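/- Let n ≥ 1 be a natural number and let r be a real number with 0 < r ≤ π/3. Let x_0, x_1, …, x_k be unit vectors in EuclideanSpace ℝ (Fin (n+1)) such that for all 0 ≤ i, j ≤ k one has min(arccos⟪x_i, x_j⟫, arccos(−⟪x_i, x_j⟫)) < r (i.e., the antipodal orbits {±x_i} have pairwise quotient distance < r). Then there exist signs ε_1, …, ε_k ∈ {1, −1} such that, setting ε_0 = 1, arccos(ε_i ε_j ⟪x_i, x_j⟫) < r for all 0 ≤ i, j ≤ k; moreover these signs are unique: if δ_1, …, δ_k ∈ {1, −1} also satisfy arccos(δ_i ⟪x_0, x_i⟫) < r for all i, then δ_i = ε_i for every i. (This says the antipodal C₂-action on the unit sphere is a strong r-diameter action for 0 < r ≤ π/3.) -/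

import Mathlib

open Real
open scoped RealInnerProductSpace

/-- The antipodal `C₂`-action on the unit sphere of `EuclideanSpace ℝ (Fin (n+1))` is a
strong `r`-diameter action for `0 < r ≤ π/3`: if the antipodal orbits `{± x i}` of unit
vectors `x 0, …, x k` have pairwise quotient distance `< r`, there are signs `ε i ∈ {1, −1}`
with `ε 0 = 1` such that `arccos (ε i * ε j * ⟪x i, x j⟫) < r` for all `i, j`, and these
signs are unique among families of signs `δ` with `δ 0 = 1` and
`arccos (δ i * ⟪x 0, x i⟫) < r` for all `i`. -/
theorem antipodal_strong_r_diameter_action (n : ℕ) (hn : 1 ≤ n)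
    (r : ℝ) (hr₀ : 0 < r) (hr : r ≤ π / 3)
    (k : ℕ) (x : Fin (k + 1) → EuclideanSpace ℝ (Fin (n + 1))) (hx : ∀ i, ‖x i‖ = 1)
    (horb : ∀ i j, min (Real.arccos ⟪x i, x j⟫) (Real.arccos (-⟪x i, x j⟫)) < r) :
    ∃ ε : Fin (k + 1) → ℝ, ε 0 = 1 ∧ (∀ i, ε i = 1 ∨ ε i = -1) ∧
      (∀ i j, Real.arccos (ε i * ε j * ⟪x i, x j⟫) < r) ∧
      ∀ δ : Fin (k + 1) → ℝ, δ 0 = 1 → (∀ i, δ i = 1 ∨ δ i = -1) →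
        (∀ i, Real.arccos (δ i * ⟪x 0, x i⟫) < r) →
        ∀ i, δ i = ε i := by
  classical
  have hang : ∀ u v : EuclideanSpace ℝ (Fin (n + 1)), ‖u‖ = 1 → ‖v‖ = 1 →
      InnerProductGeometry.angle u v = Real.arccos ⟪u, v⟫ := by
    intro u v hu hv
    simp [InnerProductGeometry.angle, hu, hv]
  have hpi := Real.pi_pos
  set ε : Fin (k + 1) → ℝ := fun i => if Real.arccos ⟪x 0, x i⟫ < r then 1 else -1 with hε
  have h1 : ∀ i, ε i = 1 ∨ ε i = -1 := by
    intro i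
    simp only [hε]
    split_ifs <;> simp
  have h0 : ∀ i, Real.arccos (ε i * ⟪x 0, x i⟫) < r := by
    intro i
    by_cases h : Real.arccos ⟪x 0, x i⟫ < r
    · have : ε i = 1 := if_pos h
      rw [this, one_mul]; exact h
    · have : ε i = -1 := if_neg h
      rw [this, neg_one_mul]
      rcases min_lt_iff.1 (horb 0 i) with h' | h'
      · exact absurd h' h
      · exact h'
  refine ⟨ε, ?_, h1, ?_, ?_⟩
  · apply if_pos
    rw [real_inner_self_eq_norm_sq, hx]
    simpa using hr₀
  · intro i j
    have hn1 : ∀ i, ‖ε i • x i‖ = 1 := by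
      intro i
      rcases h1 i with h | h <;> simp [h, hx]
    have htri := InnerProductGeometry.angle_le_angle_add_angle (ε i • x i) (x 0) (ε j • x j)
    rw [hang _ _ (hn1 i) (hn1 j), hang _ _ (hn1 i) (hx 0), hang _ _ (hx 0) (hn1 j),
      real_inner_smul_left, real_inner_smul_left, real_inner_smul_right, real_inner_smul_right,
      real_inner_comm (x 0) (x i), ← mul_assoc] at htri
    have hi := h0 i
    have hj := h0 j
    have key : Real.arccos (ε i * ε j * ⟪x i, x j⟫) < r ∨
        Real.arccos (-(ε i * ε j * ⟪x i, x j⟫)) < r := by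
      have := min_lt_iff.1 (horb i j)
      rcases h1 i with h | h <;> rcases h1 j with h' | h' <;> simp only [h, h'] <;> norm_num <;>
        tauto
    rcases key with h | h
    · exact h
    · rw [Real.arccos_neg] at h
      linarith
  · intro δ _ hδ hδr i
    have a := hδr i
    have b := h0 i
    rcases hδ i with h | h <;> rcases h1 i with h' | h' <;> rw [h, h'] <;> exfalso <;>
      rw [h] at a <;> rw [h'] at b <;> simp only [neg_mul, one_mul, Real.arccos_neg] at a b <;>
      linarith
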